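/- arXiv:2401.08013 — 3 statements merged into one kernel-verified Lean document; each statement's English description precedes it below -/
import Mathlib

section
/- Starting from any s^0 ∈ ℝ^K, the CULO model produces a sequence of strategies p^t (t = 0, 1, 2, …, all strictly positive) satisfying ⟨e, log p^t⟩ = −r·⟨e, s^0⟩ for every t ≥ 0 and every e ∈ ker(Σ) ∩ ker(Λ). -/
/-!
The logit map gives `log pₖ = -r sₖ - log Z(od k)`, where the normaliser `Z` depends on the OD pair
only, so `log p + r s` lies in the row space of `Σ` and is annihilated by `e ∈ ker Σ`
(`dotProduct_log_logit`). Each update of `s` adds a multiple of a route cost, which lies in the row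
space of `Λ` and is annihilated by `e ∈ ker Λ` (`dotProduct_routeCost`), so `⟨e, sᵗ⟩` stays equal to
`⟨e, s⁰⟩`.
-/

open Matrix Filter Finset Topology

noncomputable section

variable {A W K : Type*}

/-- OD-route incidence matrix `Σ`: each column is the standard unit vector at `od k`
(every route `k` serves exactly one OD pair, `od k`). -/
def Sig [DecidableEq W] (od : K → W) : Matrix W K ℝ :=
  Matrix.of fun w k => if od k = w then 1 else 0

/-- The strategy set `P = {p : p ≥ 0, Σ p = 1}`. -/
def Pset [Fintype K] [DecidableEq W] (od : K → W) : Set (K → ℝ) :=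
  {p | (∀ k, 0 ≤ p k) ∧ ∀ w : W, (Sig od).mulVec p w = 1}

/-- `q = Σᵀ d`. -/
def qvec [Fintype W] [DecidableEq W] (od : K → W) (d : W → ℝ) : K → ℝ :=
  (Sig od)ᵀ.mulVec d

/-- `bΛ = Λ · diag q`. -/
def bLam [Fintype K] [Fintype W] [DecidableEq W] [DecidableEq K]
    (Λ : Matrix A K ℝ) (od : K → W) (d : W → ℝ) : Matrix A K ℝ :=
  Λ * Matrix.diagonal (qvec od d)

/-- The link-flow set `X = {bΛ p : p ∈ P}`. -/
def Xset [Fintype K] [Fintype W] [DecidableEq W] [DecidableEq K]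
    (Λ : Matrix A K ℝ) (od : K → W) (d : W → ℝ) : Set (A → ℝ) :=
  (fun p => (bLam Λ od d).mulVec p) '' Pset od

/-- The route-cost map `c(p) = Λᵀ u(bΛ p)`. -/
def routeCost [Fintype A] [Fintype K] [Fintype W] [DecidableEq W] [DecidableEq K]
    (Λ : Matrix A K ℝ) (od : K → W) (d : W → ℝ)
    (u : (A → ℝ) → (A → ℝ)) : (K → ℝ) → (K → ℝ) :=
  fun p => Λᵀ.mulVec (u ((bLam Λ od d).mulVec p))

/-- The UE set `P*`: solutions of the variational inequality. -/
def UEset [Fintype A] [Fintype K] [Fintype W] [DecidableEq W] [DecidableEq K]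
    (Λ : Matrix A K ℝ) (od : K → W) (d : W → ℝ)
    (u : (A → ℝ) → (A → ℝ)) : Set (K → ℝ) :=
  {p | p ∈ Pset od ∧ ∀ p' ∈ Pset od, 0 ≤ routeCost Λ od d u p ⬝ᵥ (p' - p)}

/-- The logit map `q_r`. -/
def logit [Fintype K] [DecidableEq W] (od : K → W) (r : ℝ) (s : K → ℝ) : K → ℝ :=
  fun k => Real.exp (-r * s k) /
    ∑ k' ∈ Finset.univ.filter (fun k' => od k' = od k), Real.exp (-r * s k')

/-- The negative entropy `φ(p) = ∑ₖ qₖ pₖ log pₖ` (with `0·log 0 = 0`). -/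
def negEnt [Fintype K] [Fintype W] [DecidableEq W] (od : K → W) (d : W → ℝ)
    (p : K → ℝ) : ℝ :=
  ∑ k, qvec od d k * (p k * Real.log (p k))

/-- The KL divergence `D(p, p') = ∑ₖ qₖ pₖ (log pₖ − log p'ₖ)` (with `0·log 0 = 0`). -/
def KLdiv [Fintype K] [Fintype W] [DecidableEq W] (od : K → W) (d : W → ℝ)
    (p p' : K → ℝ) : ℝ :=
  ∑ k, qvec od d k * (p k * (Real.log (p k) - Real.log (p' k)))

theorem logit_denom_pos [Fintype K] [DecidableEq W] (od : K → W) (r : ℝ) (s : K → ℝ) (k : K) :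
    0 < ∑ k' ∈ Finset.univ.filter (fun k' => od k' = od k), Real.exp (-r * s k') :=
  Finset.sum_pos (fun _ _ => Real.exp_pos _) ⟨k, by simp⟩

theorem logit_pos [Fintype K] [DecidableEq W] (od : K → W) (r : ℝ) (s : K → ℝ) (k : K) :
    0 < logit od r s k :=
  div_pos (Real.exp_pos _) (logit_denom_pos od r s k)

/-- Vectors in `ker Σ` are orthogonal to every function of the OD pair, i.e. to the range of `Σᵀ`. -/
theorem dotProduct_comp_od [Fintype W] [Fintype K] [DecidableEq W] (od : K → W) (g : W → ℝ)
    {e : K → ℝ} (he : (Sig od).mulVec e = 0) : e ⬝ᵥ (fun k => g (od k)) = 0 := by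
  have h : (fun k => g (od k)) = (Sig od)ᵀ.mulVec g := by
    ext k
    simp [Sig, Matrix.mulVec, dotProduct]
  rw [h, Matrix.dotProduct_mulVec, Matrix.vecMul_transpose, he, zero_dotProduct]

theorem dotProduct_log_logit [Fintype W] [Fintype K] [DecidableEq W] (od : K → W) (r : ℝ)
    (s : K → ℝ) {e : K → ℝ} (he : (Sig od).mulVec e = 0) :
    e ⬝ᵥ (fun k => Real.log (logit od r s k)) = -r * (e ⬝ᵥ s) := by
  let Z : W → ℝ := fun w =>
    ∑ k' ∈ Finset.univ.filter (fun k' => od k' = w), Real.exp (-r * s k')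
  have h : (fun k => Real.log (logit od r s k)) = (-r) • s - fun k => Real.log (Z (od k)) := by
    ext k
    simp only [logit, Pi.sub_apply, Pi.smul_apply, smul_eq_mul, Z]
    rw [Real.log_div (Real.exp_ne_zero _) (logit_denom_pos od r s k).ne', Real.log_exp]
  have hZ := dotProduct_comp_od od (fun w => Real.log (Z w)) he
  rw [h, dotProduct_sub, hZ, dotProduct_smul, smul_eq_mul, sub_zero]

theorem dotProduct_routeCost [Fintype A] [Fintype W] [Fintype K] [DecidableEq W] [DecidableEq K]
    (Λ : Matrix A K ℝ) (od : K → W) (d : W → ℝ) (u : (A → ℝ) → (A → ℝ)) (p : K → ℝ)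
    {e : K → ℝ} (he : Λ.mulVec e = 0) : e ⬝ᵥ routeCost Λ od d u p = 0 := by
  rw [routeCost, Matrix.dotProduct_mulVec, Matrix.vecMul_transpose, he, zero_dotProduct]

/-- Lemma 1: starting from any `s⁰ ∈ ℝ^K`, the CULO model produces a
sequence of strategies `pᵗ` (all strictly positive) with
`⟨e, log pᵗ⟩ = −r·⟨e, s⁰⟩` for every `t ≥ 0` and every `e ∈ ker Σ ∩ ker Λ`. -/
theorem statement5
    [Fintype A] [Fintype W] [Fintype K] [DecidableEq W] [DecidableEq K]
    (Λ : Matrix A K ℝ) (od : K → W) (d : W → ℝ)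
    (hΛ : ∀ a k, Λ a k = 0 ∨ Λ a k = 1)
    (hd : ∀ w, 0 < d w)
    (u : (A → ℝ) → (A → ℝ))
    (r : ℝ) (hr : 0 < r)
    (η : ℕ → ℝ) (hη : ∀ t, 0 < η t)
    (s : ℕ → K → ℝ) (p : ℕ → K → ℝ) (s0 : K → ℝ)
    (hs0 : s 0 = s0)
    (hsdyn : ∀ t, s (t + 1) = s t + η (t + 1) • routeCost Λ od d u (p t))
    (hpdyn : ∀ t, p t = logit od r (s t)) :
    (∀ t k, 0 < p t k) ∧
    ∀ t, ∀ e : K → ℝ, (Sig od).mulVec e = 0 → Λ.mulVec e = 0 →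
      e ⬝ᵥ (fun k => Real.log (p t k)) = -r * (e ⬝ᵥ s0) := by
  refine ⟨fun t k => hpdyn t ▸ logit_pos od r (s t) k, fun t e hsig hker => ?_⟩
  have hconst : ∀ t, e ⬝ᵥ s t = e ⬝ᵥ s0 := by
    intro t
    induction t with
    | zero => rw [hs0]
    | succ t ih =>
      rw [hsdyn, dotProduct_add, dotProduct_smul, dotProduct_routeCost Λ od d u (p t) hker,
        smul_zero, add_zero, ih]
  rw [hpdyn, dotProduct_log_logit od r (s t) hsig, hconst]
end
end

section
/- Let p^0 ∈ P and p̄* ∈ P* be strictly positive componentwise. If ⟨e, log p̄* − log p^0⟩ = 0 for every e ∈ ker(Σ) ∩ ker(Λ), then p̄* is the KL projection of p^0 onto P*: D(p̄*, p^0) ≤ D(p*, p^0) for every p* ∈ P*. -/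
/-!
All user equilibria share one link flow. Indeed `P` is a product over OD pairs, so the variational
inequality may be tested one OD block at a time, and the block inequalities may be added with the
weights `d_w`; this turns it into the link-flow inequality `⟨u(x), x' - x⟩ ≥ 0`, and
strict monotonicity of `u` forces `x = x'` (`UEset_flow_eq`).

Hence for `p ∈ P*` the flow difference `e = diag(q) (p - p̄)` lies in `ker Σ ∩ ker Λ`, and the
hypothesis on `p̄` gives the Pythagorean identity `D(p, p⁰) - D(p̄, p⁰) = D(p, p̄)`. The right side is
nonnegative by `a (log a - log b) ≥ a - b` and `∑ₖ eₖ = 0`.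
-/

open Matrix Filter Finset Topology

noncomputable section

variable {A W K : Type*}

lemma qvec_apply [Fintype W] [DecidableEq W] (od : K → W) (d : W → ℝ) (k : K) :
    qvec od d k = d (od k) := by
  simp [qvec, Sig, Matrix.mulVec, dotProduct]

lemma Sig_mulVec_apply [Fintype K] [DecidableEq W] (od : K → W) (p : K → ℝ) (w : W) :
    (Sig od).mulVec p w = ∑ k, if od k = w then p k else 0 := by
  simp [Sig, Matrix.mulVec, dotProduct]

lemma bLam_mulVec [Fintype K] [Fintype W] [DecidableEq W] [DecidableEq K]
    (Λ : Matrix A K ℝ) (od : K → W) (d : W → ℝ) (p : K → ℝ) :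
    (bLam Λ od d).mulVec p = Λ.mulVec (fun k => d (od k) * p k) := by
  rw [bLam, ← Matrix.mulVec_mulVec]
  congr 1
  ext k
  rw [Matrix.mulVec_diagonal, qvec_apply]

/-- The equilibrium inequality restricted to the routes of a single OD pair. -/
lemma UEset_block [Fintype A] [Fintype W] [Fintype K] [DecidableEq W] [DecidableEq K]
    {Λ : Matrix A K ℝ} {od : K → W} {d : W → ℝ} {u : (A → ℝ) → (A → ℝ)}
    {p p' : K → ℝ} (hp : p ∈ UEset Λ od d u) (hp' : p' ∈ Pset od) (w : W) :
    0 ≤ ∑ k, if od k = w then routeCost Λ od d u p k * (p' k - p k) else 0 := by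
  -- Test against the strategy that follows `p'` on the OD pair `w` and `p` elsewhere.
  have hmem : (fun k => if od k = w then p' k else p k) ∈ Pset od := by
    refine ⟨fun k => ?_, fun v => ?_⟩
    · dsimp only
      split_ifs
      · exact hp'.1 k
      · exact hp.1.1 k
    · rw [Sig_mulVec_apply]
      by_cases hv : v = w
      · rw [← hp'.2 v, Sig_mulVec_apply]
        refine Finset.sum_congr rfl fun k _ => ?_
        by_cases h : od k = v <;> simp_all
      · rw [← hp.1.2 v, Sig_mulVec_apply]
        refine Finset.sum_congr rfl fun k _ => ?_
        by_cases h : od k = v <;> simp_all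
  refine (hp.2 _ hmem).trans_eq (Finset.sum_congr rfl fun k _ => ?_)
  by_cases h : od k = w <;> simp [h]

/-- The equilibrium inequality in terms of link flows. -/
lemma UEset_flow_vi [Fintype A] [Fintype W] [Fintype K] [DecidableEq W] [DecidableEq K]
    {Λ : Matrix A K ℝ} {od : K → W} {d : W → ℝ} (hd : ∀ w, 0 < d w) {u : (A → ℝ) → (A → ℝ)}
    {p p' : K → ℝ} (hp : p ∈ UEset Λ od d u) (hp' : p' ∈ Pset od) :
    0 ≤ u ((bLam Λ od d).mulVec p) ⬝ᵥ ((bLam Λ od d).mulVec p' - (bLam Λ od d).mulVec p) := by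
  have hsum : 0 ≤ ∑ w, d w *
      ∑ k, if od k = w then routeCost Λ od d u p k * (p' k - p k) else 0 :=
    Finset.sum_nonneg fun w _ => mul_nonneg (hd w).le (UEset_block hp hp' w)
  refine hsum.trans_eq ?_
  have hr : u ((bLam Λ od d).mulVec p) ⬝ᵥ ((bLam Λ od d).mulVec p' - (bLam Λ od d).mulVec p)
      = routeCost Λ od d u p ⬝ᵥ (fun k => d (od k) * (p' k - p k)) := by
    rw [routeCost, Matrix.mulVec_transpose, ← Matrix.dotProduct_mulVec]
    congr 1
    rw [bLam_mulVec Λ od d p', bLam_mulVec Λ od d p, ← Matrix.mulVec_sub]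
    congr 1
    ext k
    simp only [Pi.sub_apply]
    ring
  rw [hr]
  simp only [Finset.mul_sum, dotProduct]
  rw [Finset.sum_comm]
  refine Finset.sum_congr rfl fun k _ => ?_
  simp only [mul_ite, mul_zero, Finset.sum_ite_eq, Finset.mem_univ, if_true]
  ring

/-- Uniqueness of the equilibrium link flow. -/
lemma UEset_flow_eq [Fintype A] [Fintype W] [Fintype K] [DecidableEq W] [DecidableEq K]
    {Λ : Matrix A K ℝ} {od : K → W} {d : W → ℝ} (hd : ∀ w, 0 < d w) {u : (A → ℝ) → (A → ℝ)}
    (hmono : ∀ x ∈ Xset Λ od d, ∀ x' ∈ Xset Λ od d, x ≠ x' →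
      0 < (u x - u x') ⬝ᵥ (x - x'))
    {p p' : K → ℝ} (hp : p ∈ UEset Λ od d u) (hp' : p' ∈ UEset Λ od d u) :
    (bLam Λ od d).mulVec p = (bLam Λ od d).mulVec p' := by
  by_contra hne
  have h := hmono _ ⟨p, hp.1, rfl⟩ _ ⟨p', hp'.1, rfl⟩ hne
  have h1 := UEset_flow_vi hd hp hp'.1
  have h2 := UEset_flow_vi hd hp' hp.1
  simp only [sub_dotProduct, dotProduct_sub] at h h1 h2
  linarith

/-- Here `a = 0` is allowed, with `0 * log 0 = 0`. -/
lemma sub_le_mul_log_sub_log {a b : ℝ} (ha : 0 ≤ a) (hb : 0 < b) :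
    a - b ≤ a * (Real.log a - Real.log b) := by
  rcases ha.eq_or_lt with rfl | ha
  · simp [hb.le]
  · have h := Real.log_le_sub_one_of_pos (div_pos hb ha)
    rw [Real.log_div hb.ne' ha.ne'] at h
    have h2 := mul_le_mul_of_nonneg_left h ha.le
    have h3 : a * (b / a - 1) = b - a := by field_simp
    linarith

/-- Lemma 2: let `p⁰ ∈ P` and `p̄* ∈ P*` be strictly positive.
If `⟨e, log p̄* − log p⁰⟩ = 0` for every `e ∈ ker Σ ∩ ker Λ`, then `p̄*` is the KL
projection of `p⁰` onto `P*`: `D(p̄*, p⁰) ≤ D(p*, p⁰)` for every `p* ∈ P*`. -/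
theorem statement6
    [Fintype A] [Fintype W] [Fintype K] [DecidableEq W] [DecidableEq K]
    (Λ : Matrix A K ℝ) (od : K → W) (d : W → ℝ)
    (hΛ : ∀ a k, Λ a k = 0 ∨ Λ a k = 1)
    (hd : ∀ w, 0 < d w)
    (u : (A → ℝ) → (A → ℝ))
    (hu : ContinuousOn u (Xset Λ od d))
    (hmono : ∀ x ∈ Xset Λ od d, ∀ x' ∈ Xset Λ od d, x ≠ x' →
      0 < (u x - u x') ⬝ᵥ (x - x'))
    (p0 : K → ℝ) (hp0 : p0 ∈ Pset od) (hp0pos : ∀ k, 0 < p0 k)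
    (pbar : K → ℝ) (hpbar : pbar ∈ UEset Λ od d u) (hpbarpos : ∀ k, 0 < pbar k)
    (hprop : ∀ e : K → ℝ, (Sig od).mulVec e = 0 → Λ.mulVec e = 0 →
      e ⬝ᵥ (fun k => Real.log (pbar k) - Real.log (p0 k)) = 0) :
    ∀ p ∈ UEset Λ od d u, KLdiv od d pbar p0 ≤ KLdiv od d p p0 := by
  intro p hp
  set e : K → ℝ := fun k => d (od k) * (p k - pbar k) with he
  have hSig : (Sig od).mulVec e = 0 := by
    ext w
    have hw : (Sig od).mulVec e w = d w * ((Sig od).mulVec p w - (Sig od).mulVec pbar w) := by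
      simp only [Sig_mulVec_apply, ← Finset.sum_sub_distrib, Finset.mul_sum]
      refine Finset.sum_congr rfl fun k _ => ?_
      by_cases h : od k = w <;> simp [he, h]
    rw [hw, hp.1.2 w, hpbar.1.2 w]
    simp
  have hLam : Λ.mulVec e = 0 := by
    have hflow := UEset_flow_eq hd hmono hp hpbar
    rw [bLam_mulVec, bLam_mulVec, ← sub_eq_zero, ← Matrix.mulVec_sub] at hflow
    rw [← hflow]
    congr 1
    ext k
    simp only [he, Pi.sub_apply]
    ring
  have horth := hprop e hSig hLam
  -- Adding the rows of `Σ` gives the all-ones row, so `e ∈ ker Σ` has total mass zero.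
  have hmass : ∑ k, e k = 0 := by
    have h : ∑ w, (Sig od).mulVec e w = 0 := by simp [hSig]
    simp only [Sig_mulVec_apply] at h
    rw [Finset.sum_comm] at h
    simpa using h
  have hD : ∑ k, e k ≤ ∑ k, d (od k) * (p k * (Real.log (p k) - Real.log (pbar k))) :=
    Finset.sum_le_sum fun k _ => mul_le_mul_of_nonneg_left
      (sub_le_mul_log_sub_log (hp.1.1 k) (hpbarpos k)) (hd _).le
  have hpyth : KLdiv od d p p0 - KLdiv od d pbar p0
      = (∑ k, d (od k) * (p k * (Real.log (p k) - Real.log (pbar k))))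
        + e ⬝ᵥ (fun k => Real.log (pbar k) - Real.log (p0 k)) := by
    simp only [KLdiv, dotProduct, ← Finset.sum_sub_distrib, ← Finset.sum_add_distrib, qvec_apply,
      he]
    refine Finset.sum_congr rfl fun k _ => ?_
    ring
  linarith
end
end

section
/- Consider CULO with route exploration and cumulative link valuations (Algorithm 2): link valuations update by v^{t+1} = v^t + u(x^t) starting from v^0 = 0; all active routes in K_+^t are valued by s_+^t = (Λ_+^t)ᵀ v^t; the strategy p_+^t is the logit choice with parameter r over K_+^t; and for each OD pair a minimum-cost route under u(x^t) is added to K_+^{t+1} if absent. Suppose the algorithm converges to a fixed active route set K̄_+ and a fixed strategy p̄_+. If K̄_+ ⊇ ∪_{p* ∈ P*} supp(p*), then the extension p̄ = [p̄_+; 0] belongs to P* and is the MEUE strategy, i.e., the unique minimizer of the negative entropy φ over P*. -/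
/-!
Three ideas carry the proof.

*Equilibrium.* Strategies converge, so route costs converge to `c(pbar)`. A route of the limit active
set that is strictly costlier in the limit than another active route of the same OD pair has a relative
valuation growing linearly, so its logit probability vanishes (`valuation_diff_tendsto_atTop`).
As the active set contains a cheapest route of every OD pair infinitely often, hence also in
the limit, `pbar` uses only cheapest routes, and this is the variational inequality
(`mem_UEset_of_wardrop`).

*Uniqueness of link flows.* The variational inequality also holds with the route costs
weighted by demands (`weighted_vi`), since strategies of different OD pairs can be
perturbed independently; strict monotonicity then gives all equilibria the same link flow
(`UE_flow_unique`).

*Entropy.* On active routes `log (p t)` is a combination of rows of `Λ` and of `Σ`, so it is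
orthogonal to the demand-weighted difference `p' - pbar` of two equilibria supported on active routes:
`∑ q p' log (p t) = ∑ q pbar log (p t)`. The right side tends to `φ(pbar)`; hence `p'` is
supported within the support of `pbar`, and in the limit `∑ q p' log pbar = φ(pbar)`.
So `φ(p') - φ(pbar)` is a weighted Kullback-Leibler divergence, positive unless
`p' = pbar` (`gibbs_strict`).
-/

open Matrix Filter Finset Topology

noncomputable section

variable {A W K : Type*}

lemma sig_mulVec [Fintype K] [DecidableEq W] (od : K → W) (p : K → ℝ) (w : W) :
    (Sig od).mulVec p w = ∑ k ∈ Finset.univ.filter (fun k => od k = w), p k := by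
  simp [Sig, Matrix.mulVec, dotProduct, Finset.sum_filter]

lemma sum_od_mul [Fintype K] [Fintype W] [DecidableEq W] (od : K → W) (p : K → ℝ)
    (hp : p ∈ Pset od) (g : W → ℝ) : ∑ k, g (od k) * p k = ∑ w, g w := by
  rw [← Finset.sum_fiberwise (s := Finset.univ) (g := od)]
  refine Finset.sum_congr rfl fun w _ => ?_
  have h := hp.2 w
  rw [sig_mulVec] at h
  calc ∑ k ∈ Finset.univ.filter (fun k => od k = w), g (od k) * p k
      = ∑ k ∈ Finset.univ.filter (fun k => od k = w), g w * p k := by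
        refine Finset.sum_congr rfl fun k hk => ?_
        rw [(Finset.mem_filter.1 hk).2]
    _ = g w := by rw [← Finset.mul_sum, h, mul_one]

lemma dot_bLam [Fintype A] [Fintype K] [Fintype W] [DecidableEq W] [DecidableEq K]
    (Λ : Matrix A K ℝ) (od : K → W) (d : W → ℝ) (v : A → ℝ) (z : K → ℝ) :
    v ⬝ᵥ (bLam Λ od d).mulVec z = ∑ k, d (od k) * (Λᵀ.mulVec v k * z k) := by
  rw [bLam, ← Matrix.mulVec_mulVec, Matrix.dotProduct_mulVec, ← Matrix.mulVec_transpose]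
  simp only [dotProduct, Matrix.mulVec_diagonal, qvec_apply]
  exact Finset.sum_congr rfl fun k _ => by ring

lemma le_one_of_mem_Pset [Fintype K] [DecidableEq W] (od : K → W) (p : K → ℝ)
    (hp : p ∈ Pset od) (k : K) : p k ≤ 1 := by
  have h := hp.2 (od k)
  rw [sig_mulVec] at h
  rw [← h]
  exact Finset.single_le_sum (f := p) (fun i _ => hp.1 i) (by simp)

lemma isClosed_Pset [Fintype K] [DecidableEq W] (od : K → W) :
    IsClosed (Pset od : Set (K → ℝ)) := by
  have h : (Pset od : Set (K → ℝ)) =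
      (⋂ k, {p | 0 ≤ p k}) ∩ ⋂ w : W, {p | (Sig od).mulVec p w = 1} := by
    ext p; simp [Pset]
  rw [h]
  refine (isClosed_iInter fun k => ?_).inter (isClosed_iInter fun w => ?_)
  · exact isClosed_le continuous_const (continuous_apply k)
  · refine isClosed_eq ?_ continuous_const
    simp only [sig_mulVec]
    fun_prop

/-! ### User equilibria -/

/-- Strategies that put weight on cheapest routes only are user equilibria. -/
lemma mem_UEset_of_wardrop [Fintype A] [Fintype K] [Fintype W] [DecidableEq W] [DecidableEq K]
    (Λ : Matrix A K ℝ) (od : K → W) (d : W → ℝ) (u : (A → ℝ) → (A → ℝ)) (p : K → ℝ)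
    (hp : p ∈ Pset od) (m : W → ℝ)
    (hm : ∀ k, m (od k) ≤ routeCost Λ od d u p k)
    (hs : ∀ k, p k ≠ 0 → routeCost Λ od d u p k = m (od k)) :
    p ∈ UEset Λ od d u := by
  refine ⟨hp, fun p' hp' => ?_⟩
  have h1 : routeCost Λ od d u p ⬝ᵥ p = ∑ w, m w := by
    rw [← sum_od_mul od p hp m]
    refine Finset.sum_congr rfl fun k _ => ?_
    by_cases h : p k = 0
    · simp [h]
    · rw [hs k h]
  have h2 : ∑ w, m w ≤ routeCost Λ od d u p ⬝ᵥ p' := by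
    rw [← sum_od_mul od p' hp' m]
    exact Finset.sum_le_sum fun k _ => mul_le_mul_of_nonneg_right (hm k) (hp'.1 k)
  rw [dotProduct_sub]
  linarith

/-- The variational inequality with each OD pair weighted by its demand. It is tested against the
strategy moving from `p` towards `p'` by a fraction of OD pair `w` proportional to `d w`. -/
lemma weighted_vi [Fintype A] [Fintype K] [Fintype W] [DecidableEq W] [DecidableEq K]
    (Λ : Matrix A K ℝ) (od : K → W) (d : W → ℝ) (hd : ∀ w, 0 < d w)
    (u : (A → ℝ) → (A → ℝ)) (p p' : K → ℝ)
    (hp : p ∈ UEset Λ od d u) (hp' : p' ∈ Pset od) :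
    0 ≤ ∑ k, d (od k) * (routeCost Λ od d u p k * (p' - p) k) := by
  -- the added `1` keeps `D` positive when there is no OD pair
  set D : ℝ := 1 + ∑ w, d w with hD
  have hDpos : 0 < D := by
    have : 0 ≤ ∑ w, d w := Finset.sum_nonneg fun w _ => (hd w).le
    linarith
  have hdD : ∀ w, d w / D ≤ 1 := fun w => by
    rw [div_le_one hDpos]
    have := Finset.single_le_sum (f := d) (fun i _ => (hd i).le) (Finset.mem_univ w)
    linarith
  have hmem : (fun k => p k + d (od k) / D * (p' k - p k)) ∈ Pset od := by
    refine ⟨fun k => ?_, fun w => ?_⟩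
    · have h0 : 0 ≤ d (od k) / D := (div_pos (hd _) hDpos).le
      have h1 := mul_nonneg (sub_nonneg.2 (hdD (od k))) (hp.1.1 k)
      have h2 := mul_nonneg h0 (hp'.1 k)
      show 0 ≤ p k + d (od k) / D * (p' k - p k)
      linarith
    · have e1 := hp.1.2 w
      have e2 := hp'.2 w
      rw [sig_mulVec] at e1 e2 ⊢
      have : ∑ k ∈ Finset.univ.filter (fun k => od k = w), d (od k) / D * (p' k - p k)
          = ∑ k ∈ Finset.univ.filter (fun k => od k = w), d w / D * (p' k - p k) :=
        Finset.sum_congr rfl fun k hk => by rw [(Finset.mem_filter.1 hk).2]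
      rw [Finset.sum_add_distrib, this, ← Finset.mul_sum, Finset.sum_sub_distrib, e1, e2]
      simp
  have h := hp.2 _ hmem
  have e : ∑ k, d (od k) * (routeCost Λ od d u p k * (p' - p) k)
      = D * (routeCost Λ od d u p ⬝ᵥ ((fun k => p k + d (od k) / D * (p' k - p k)) - p)) := by
    rw [dotProduct, Finset.mul_sum]
    refine Finset.sum_congr rfl fun k _ => ?_
    simp only [Pi.sub_apply]
    field_simp
    ring
  rw [e]
  exact mul_nonneg hDpos.le h

lemma UE_flow_unique [Fintype A] [Fintype K] [Fintype W] [DecidableEq W] [DecidableEq K]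
    (Λ : Matrix A K ℝ) (od : K → W) (d : W → ℝ) (hd : ∀ w, 0 < d w)
    (u : (A → ℝ) → (A → ℝ))
    (hmono : ∀ x ∈ Xset Λ od d, ∀ x' ∈ Xset Λ od d, x ≠ x' →
      0 < (u x - u x') ⬝ᵥ (x - x'))
    (p p' : K → ℝ) (hp : p ∈ UEset Λ od d u) (hp' : p' ∈ UEset Λ od d u) :
    (bLam Λ od d).mulVec p = (bLam Λ od d).mulVec p' := by
  by_contra hne
  have h := hmono _ ⟨p, hp.1, rfl⟩ _ ⟨p', hp'.1, rfl⟩ hne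
  have h1 := weighted_vi Λ od d hd u p p' hp hp'.1
  have h2 := weighted_vi Λ od d hd u p' p hp' hp.1
  simp only [routeCost] at h1 h2
  rw [← dot_bLam, Matrix.mulVec_sub] at h1 h2
  simp only [sub_dotProduct, dotProduct_sub] at h h1 h2
  linarith

/-! ### Divergence of valuations and the Gibbs inequality -/

/-- A real sequence whose increments have a positive limit diverges. -/
lemma valuation_diff_tendsto_atTop (b g : ℕ → ℝ) (hb : ∀ t, b (t + 1) = b t + g t) (δ : ℝ)
    (hδ : 0 < δ) (hg : Tendsto g atTop (𝓝 δ)) : Tendsto b atTop atTop := by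
  obtain ⟨T, hT⟩ := eventually_atTop.1 (hg.eventually (lt_mem_nhds (half_lt_self hδ)))
  have hlow : ∀ n : ℕ, b T + n * (δ / 2) ≤ b (n + T) := by
    intro n
    induction n with
    | zero => simp
    | succ n ih =>
      have h1 := hT (n + T) (by omega)
      have h2 := hb (n + T)
      have h3 : n + 1 + T = n + T + 1 := by ring
      rw [h3, h2]
      push_cast
      linarith
  rw [← tendsto_add_atTop_iff_nat T]
  refine tendsto_atTop_mono hlow (tendsto_atTop_add_const_left _ _ ?_)
  exact tendsto_natCast_atTop_atTop.atTop_mul_const (half_pos hδ)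

/-- Pointwise Gibbs inequality, where the support of `a` lies in that of `b`. -/
lemma gibbs_pointwise (a b : ℝ) (ha : 0 ≤ a) (hb : 0 ≤ b) (hab : b = 0 → a = 0) :
    a - b ≤ a * Real.log a - a * Real.log b ∧
      (a ≠ b → a - b < a * Real.log a - a * Real.log b) := by
  suffices h : a ≠ b → a - b < a * Real.log a - a * Real.log b by
    refine ⟨?_, h⟩
    by_cases e : a = b
    · simp [e]
    · exact (h e).le
  intro hne
  have hb' : 0 < b := hb.lt_of_ne fun e => hne (by rw [hab e.symm, e])
  rcases ha.eq_or_lt with e | ha'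
  · subst e; simpa using hb'
  · have h := Real.log_lt_sub_one_of_pos (div_pos hb' ha')
      (fun e => hne ((div_eq_one_iff_eq ha'.ne').1 e).symm)
    rw [Real.log_div hb'.ne' ha'.ne'] at h
    have h2 := mul_lt_mul_of_pos_left h ha'
    have h3 : a * (b / a - 1) = b - a := by field_simp
    rw [h3] at h2
    linarith

/-- Strict positivity of the demand-weighted Kullback-Leibler divergence. -/
lemma gibbs_strict [Fintype K] [Fintype W] [DecidableEq W] (od : K → W) (d : W → ℝ)
    (hd : ∀ w, 0 < d w) (p p' : K → ℝ) (hp : p ∈ Pset od) (hp' : p' ∈ Pset od)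
    (hsupp : ∀ k, p k = 0 → p' k = 0) (hne : p' ≠ p) :
    ∑ k, d (od k) * (p' k * Real.log (p k)) < negEnt od d p' := by
  obtain ⟨k₀, hk₀⟩ := Function.ne_iff.1 hne
  have hz : ∑ k, d (od k) * (p' k - p k) = 0 := by
    simp only [mul_sub, Finset.sum_sub_distrib]
    rw [sum_od_mul od p' hp' d, sum_od_mul od p hp d, sub_self]
  have hlt : ∑ k, d (od k) * (p' k - p k)
      < ∑ k, d (od k) * (p' k * Real.log (p' k) - p' k * Real.log (p k)) := by
    refine Finset.sum_lt_sum (fun k _ => ?_) ⟨k₀, Finset.mem_univ _, ?_⟩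
    · exact mul_le_mul_of_nonneg_left
        (gibbs_pointwise _ _ (hp'.1 k) (hp.1 k) (hsupp k)).1 (hd _).le
    · exact mul_lt_mul_of_pos_left
        ((gibbs_pointwise _ _ (hp'.1 k₀) (hp.1 k₀) (hsupp k₀)).2 hk₀) (hd _)
  rw [hz] at hlt
  simp only [mul_sub, Finset.sum_sub_distrib] at hlt
  simp only [negEnt, qvec_apply]
  linarith

/-! ### Limits of the learning dynamics -/

/-- Proposition 8: CULO with route exploration and cumulative link
valuations (Algorithm 2). Link valuations update by `vᵗ⁺¹ = vᵗ + u(xᵗ)` from `v⁰ = 0`;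
active routes are valued by `s₊ᵗ = (Λ₊ᵗ)ᵀ vᵗ`; the strategy is the logit choice over
the active set; a minimum-cost route per OD pair is added each day if absent. If the
algorithm converges to a fixed active set `K̄₊` and strategy `p̄₊`, and
`K̄₊ ⊇ ⋃_{p* ∈ P*} supp p*`, then the extension `p̄ = [p̄₊; 0]` belongs to `P*` and is
the MEUE strategy (the unique minimizer of `φ` over `P*`). -/
theorem statement14
    [Fintype A] [Fintype W] [Fintype K] [DecidableEq W] [DecidableEq K]
    (Λ : Matrix A K ℝ) (od : K → W) (d : W → ℝ)
    (hΛ : ∀ a k, Λ a k = 0 ∨ Λ a k = 1)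
    (hd : ∀ w, 0 < d w)
    (u : (A → ℝ) → (A → ℝ))
    (hu : ContDiffOn ℝ 1 u (Xset Λ od d))
    (hnonneg : ∀ x ∈ Xset Λ od d, ∀ a, 0 ≤ u x a)
    (hmono : ∀ x ∈ Xset Λ od d, ∀ x' ∈ Xset Λ od d, x ≠ x' →
      0 < (u x - u x') ⬝ᵥ (x - x'))
    (r : ℝ) (hr : 0 < r)
    (Kt : ℕ → Finset K) (v : ℕ → A → ℝ) (p : ℕ → K → ℝ)
    -- the initial active set contains at least one route per OD pair
    (hK0 : ∀ w, ∃ k ∈ Kt 0, od k = w)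
    -- cumulative link valuations starting from zero
    (hv0 : v 0 = 0)
    (hvdyn : ∀ t, v (t + 1) = v t + u ((bLam Λ od d).mulVec (p t)))
    -- the strategy is the logit choice over the active set, with `s₊ᵗ = (Λ₊ᵗ)ᵀ vᵗ`
    (hpdyn : ∀ t k, p t k = if k ∈ Kt t then
        Real.exp (-r * Λᵀ.mulVec (v t) k) /
          ∑ k' ∈ (Kt t).filter (fun k' => od k' = od k),
            Real.exp (-r * Λᵀ.mulVec (v t) k')
      else 0)
    -- active routes are never dropped, only minimum-cost routes are added,
    -- and after the update a minimum-cost route per OD pair is active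
    (hKmono : ∀ t, Kt t ⊆ Kt (t + 1))
    (hKadd : ∀ t k, k ∈ Kt (t + 1) → k ∉ Kt t →
      ∀ k', od k' = od k →
        routeCost Λ od d u (p t) k ≤ routeCost Λ od d u (p t) k')
    (hKmin : ∀ t w, ∃ k ∈ Kt (t + 1), od k = w ∧
      ∀ k', od k' = od k →
        routeCost Λ od d u (p t) k ≤ routeCost Λ od d u (p t) k')
    -- the algorithm converges to a fixed active route set and a fixed strategy
    (Kbar : Finset K) (hKbar : ∀ᶠ t in atTop, Kt t = Kbar)
    (pbar : K → ℝ) (hconv : Tendsto p atTop (nhds pbar))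
    -- the limit active set covers all UE routes
    (hcover : ∀ pstar ∈ UEset Λ od d u, ∀ k, 0 < pstar k → k ∈ Kbar) :
    pbar ∈ UEset Λ od d u ∧
      ∀ p' ∈ UEset Λ od d u, p' ≠ pbar → negEnt od d pbar < negEnt od d p' := by
  set s : ℕ → K → ℝ := fun t => Λᵀ.mulVec (v t) with hs
  set c : ℕ → K → ℝ := fun t => routeCost Λ od d u (p t) with hc
  set cbar : K → ℝ := routeCost Λ od d u pbar with hcbar
  set Z : ℕ → W → ℝ := fun t w =>
    ∑ k' ∈ (Kt t).filter (fun k' => od k' = w), Real.exp (-r * s t k') with hZ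
  have hK : ∀ t w, ∃ k ∈ Kt t, od k = w := by
    intro t w
    obtain ⟨k, hk, hw⟩ := hK0 w
    exact ⟨k, monotone_nat_of_le_succ hKmono (Nat.zero_le t) hk, hw⟩
  have hZpos : ∀ t w, 0 < Z t w := by
    intro t w
    obtain ⟨k, hk, hw⟩ := hK t w
    exact Finset.sum_pos (fun _ _ => Real.exp_pos _) ⟨k, Finset.mem_filter.2 ⟨hk, hw⟩⟩
  have hpin : ∀ t k, k ∈ Kt t → p t k = Real.exp (-r * s t k) / Z t (od k) := by
    intro t k hk
    rw [hpdyn, if_pos hk]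
  have hpout : ∀ t k, k ∉ Kt t → p t k = 0 := by
    intro t k hk
    rw [hpdyn, if_neg hk]
  have hppos : ∀ t k, k ∈ Kt t → 0 < p t k := by
    intro t k hk
    rw [hpin t k hk]
    exact div_pos (Real.exp_pos _) (hZpos _ _)
  have hpP : ∀ t, p t ∈ Pset od := by
    intro t
    refine ⟨fun k => ?_, fun w => ?_⟩
    · by_cases hk : k ∈ Kt t
      · exact (hppos t k hk).le
      · exact (hpout t k hk).ge
    · rw [sig_mulVec]
      have hsub : (Kt t).filter (fun k => od k = w) ⊆
          Finset.univ.filter (fun k => od k = w) :=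
        Finset.filter_subset_filter _ (Finset.subset_univ _)
      rw [← Finset.sum_subset hsub]
      · calc ∑ k ∈ (Kt t).filter (fun k => od k = w), p t k
            = ∑ k ∈ (Kt t).filter (fun k => od k = w), Real.exp (-r * s t k) / Z t w := by
              refine Finset.sum_congr rfl fun k hk => ?_
              rw [Finset.mem_filter] at hk
              rw [hpin t k hk.1, hk.2]
          _ = 1 := by
              rw [← Finset.sum_div]
              exact div_self (hZpos t w).ne'
      · intro k hk hk'
        apply hpout
        intro hmem
        exact hk' (Finset.mem_filter.2 ⟨hmem, (Finset.mem_filter.1 hk).2⟩)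
  have hbarP : pbar ∈ Pset od :=
    (isClosed_Pset od).mem_of_tendsto hconv (Eventually.of_forall hpP)
  have hpk : ∀ k, Tendsto (fun t => p t k) atTop (𝓝 (pbar k)) :=
    fun k => (tendsto_pi_nhds.1 hconv) k
  have hbarout : ∀ k, k ∉ Kbar → pbar k = 0 := by
    intro k hk
    refine tendsto_nhds_unique (hpk k) (tendsto_const_nhds.congr' ?_)
    filter_upwards [hKbar] with t ht
    exact (hpout t k (by rwa [ht])).symm
  have hcont : Tendsto c atTop (𝓝 cbar) := by
    have hx : Tendsto (fun t => (bLam Λ od d).mulVec (p t)) atTop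
        (𝓝[Xset Λ od d] ((bLam Λ od d).mulVec pbar)) := by
      refine tendsto_nhdsWithin_iff.2 ⟨?_, Eventually.of_forall fun t => ⟨p t, hpP t, rfl⟩⟩
      exact ((Continuous.matrix_mulVec continuous_const continuous_id).tendsto pbar).comp hconv
    have hux := (hu.continuousOn _ ⟨pbar, hbarP, rfl⟩).tendsto.comp hx
    exact ((Continuous.matrix_mulVec continuous_const continuous_id :
      Continuous fun y : A → ℝ => Λᵀ.mulVec y).tendsto _).comp hux
  have hck : ∀ k, Tendsto (fun t => c t k) atTop (𝓝 (cbar k)) :=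
    fun k => (tendsto_pi_nhds.1 hcont) k
  -- Pigeonhole over the finitely many routes: one is active and cheapest infinitely often.
  have hmin : ∀ w, ∃ k ∈ Kbar, od k = w ∧ ∀ k', od k' = w → cbar k ≤ cbar k' := by
    intro w
    have hfreq : ∃ k, ∃ᶠ t in atTop, k ∈ Kbar ∧ od k = w ∧ ∀ k', od k' = w → c t k ≤ c t k' := by
      by_contra hcon
      push Not at hcon
      have hall := eventually_all.2 hcon
      have hK1 : ∀ᶠ t in atTop, Kt (t + 1) = Kbar := (tendsto_add_atTop_nat 1).eventually hKbar
      obtain ⟨t, ht1, ht2⟩ := (hall.and hK1).exists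
      obtain ⟨k, hk, hw, hle⟩ := hKmin t w
      obtain ⟨k', hk', hlt⟩ := ht1 k (ht2 ▸ hk) hw
      exact absurd (hle k' (hk'.trans hw.symm)) (not_le.2 hlt)
    obtain ⟨k, hk⟩ := hfreq
    obtain ⟨t, ht⟩ := hk.exists
    refine ⟨k, ht.1, ht.2.1, fun k' hk' => ?_⟩
    exact le_of_tendsto_of_tendsto_of_frequently (hck k) (hck k') (hk.mono fun t h => h.2.2 k' hk')
  choose km hkmK hkmod hkmle using hmin
  have hwardrop : ∀ k, pbar k ≠ 0 → cbar k = cbar (km (od k)) := by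
    intro k hk0
    by_contra hne
    have hlt : cbar (km (od k)) < cbar k := lt_of_le_of_ne (hkmle (od k) k rfl) (Ne.symm hne)
    have hkK : k ∈ Kbar := by
      by_contra h
      exact hk0 (hbarout k h)
    set k' := km (od k) with hk'
    have hdiv := valuation_diff_tendsto_atTop (fun t => s t k - s t k') (fun t => c t k - c t k')
      (fun t => by
        simp only [hs, hc, hvdyn, Matrix.mulVec_add, routeCost, Pi.add_apply]
        ring)
      (cbar k - cbar k') (sub_pos.2 hlt) ((hck k).sub (hck k'))
    have hexp : Tendsto (fun t => Real.exp (-(r * (s t k - s t k')))) atTop (𝓝 0) :=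
      Real.tendsto_exp_neg_atTop_nhds_zero.comp (hdiv.const_mul_atTop hr)
    have hle : ∀ᶠ t in atTop, p t k ≤ Real.exp (-(r * (s t k - s t k'))) := by
      filter_upwards [hKbar] with t ht
      rw [hpin t k (by rwa [ht]), div_le_iff₀ (hZpos _ _)]
      have h1 : Real.exp (-r * s t k') ≤ Z t (od k) :=
        Finset.single_le_sum (f := fun k' => Real.exp (-r * s t k'))
          (fun _ _ => (Real.exp_pos _).le)
          (Finset.mem_filter.2 ⟨by rw [ht]; exact hkmK _, hkmod _⟩)
      refine le_trans (le_of_eq ?_) (mul_le_mul_of_nonneg_left h1 (Real.exp_pos _).le)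
      rw [← Real.exp_add]
      congr 1
      ring
    have h0 : pbar k ≤ 0 := le_of_tendsto_of_tendsto (hpk k) hexp hle
    exact hk0 (le_antisymm h0 (hbarP.1 k))
  have hUE : pbar ∈ UEset Λ od d u :=
    mem_UEset_of_wardrop Λ od d u pbar hbarP (fun w => cbar (km w))
      (fun k => hkmle (od k) k rfl) hwardrop
  refine ⟨hUE, fun p' hp' hne => ?_⟩
  have hflow := UE_flow_unique Λ od d hd u hmono p' pbar hp' hUE
  have hp'out : ∀ k, k ∉ Kbar → p' k = 0 := by
    intro k hk
    by_contra h
    exact hk (hcover p' hp' k ((hp'.1.1 k).lt_of_ne (Ne.symm h)))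
  -- Only feasibility, active support and the link flow of `z` enter this sum.
  have hlog : ∀ t, Kt t = Kbar → ∀ z : K → ℝ, z ∈ Pset od → (∀ k, k ∉ Kbar → z k = 0) →
      ∑ k, d (od k) * (z k * Real.log (p t k)) =
        -r * (v t ⬝ᵥ (bLam Λ od d).mulVec z) - ∑ w, d w * Real.log (Z t w) := by
    intro t ht z hz hzout
    rw [← sum_od_mul od z hz (fun w => d w * Real.log (Z t w)), dot_bLam, Finset.mul_sum,
      ← Finset.sum_sub_distrib]
    refine Finset.sum_congr rfl fun k _ => ?_
    by_cases hk : k ∈ Kbar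
    · rw [hpin t k (by rwa [ht]), Real.log_div (Real.exp_pos _).ne' (hZpos _ _).ne', Real.log_exp]
      simp only [hs]
      ring
    · rw [hzout k hk]
      ring
  have heq : ∀ᶠ t in atTop, ∑ k, d (od k) * (pbar k * Real.log (p t k)) =
      ∑ k, d (od k) * (p' k * Real.log (p t k)) := by
    filter_upwards [hKbar] with t ht
    rw [hlog t ht p' hp'.1 hp'out, hlog t ht pbar hbarP hbarout, hflow]
  -- `log` is discontinuous at `0`, so convergence uses that `z` vanishes wherever `pbar` does.
  have hlim : ∀ z : K → ℝ, (∀ k, pbar k = 0 → z k = 0) →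
      Tendsto (fun t => ∑ k, d (od k) * (z k * Real.log (p t k))) atTop
        (𝓝 (∑ k, d (od k) * (z k * Real.log (pbar k)))) := by
    intro z hz
    refine tendsto_finsetSum _ fun k _ => ?_
    by_cases h : pbar k = 0
    · simp [hz k h]
    · exact (((hpk k).log h).const_mul _).const_mul _
  have hlim' := (hlim pbar fun _ h => h).congr' heq
  have hsupp : ∀ k, pbar k = 0 → p' k = 0 := by
    intro k hk
    by_contra hk'
    have hpos : 0 < p' k := (hp'.1.1 k).lt_of_ne (Ne.symm hk')
    have hkK := hcover p' hp' k hpos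
    have hlogbot : Tendsto (fun t => Real.log (p t k)) atTop atBot := by
      refine Real.tendsto_log_nhdsGT_zero.comp (tendsto_nhdsWithin_iff.2 ⟨hk ▸ hpk k, ?_⟩)
      filter_upwards [hKbar] with t ht
      exact hppos t k (by rwa [ht])
    have hbot : Tendsto (fun t => d (od k) * (p' k * Real.log (p t k))) atTop atBot :=
      (hlogbot.const_mul_atBot hpos).const_mul_atBot (hd _)
    -- All terms are nonpositive, so this one term drags the convergent sum to `-∞`.
    have hsum : Tendsto (fun t => ∑ k, d (od k) * (p' k * Real.log (p t k))) atTop atBot := by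
      refine tendsto_atBot_mono (fun t => ?_) hbot
      rw [← Finset.add_sum_erase _ _ (Finset.mem_univ k)]
      refine add_le_of_nonpos_right (Finset.sum_nonpos fun j _ => ?_)
      exact mul_nonpos_of_nonneg_of_nonpos (hd _).le (mul_nonpos_of_nonneg_of_nonpos (hp'.1.1 j)
        (Real.log_nonpos ((hpP t).1 j) (le_one_of_mem_Pset od _ (hpP t) j)))
    exact not_tendsto_nhds_of_tendsto_atBot hsum _ hlim'
  have hcross : negEnt od d pbar = ∑ k, d (od k) * (p' k * Real.log (pbar k)) := by
    simp only [negEnt, qvec_apply]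
    exact tendsto_nhds_unique hlim' (hlim p' hsupp)
  rw [hcross]
  exact gibbs_strict od d hd pbar p' hbarP hp'.1 hsupp hne
end
end
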